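/- arXiv:1507.00124 — 7 statements merged into one kernel-verified Lean document; each statement's English description precedes it below -/
import Mathlib

section
/- For every a ∈ ℝ the subspace m_a satisfies ⁅⁅m_a, m_a⁆, m_a⁆ ⊆ m_a, and if a² ≠ 1 then ⁅m_a, m_a⁆ = span_ℝ{iH, U + aT, i(T + aU)}. -/
open Matrix

/-- The matrix `H`. -/
def matH : Matrix (Fin 2) (Fin 2) ℂ := !![1, 0; 0, -1]

/-- The matrix `T`. -/
def matT : Matrix (Fin 2) (Fin 2) ℂ := !![0, 1; 1, 0]

/-- The matrix `U`. -/
def matU : Matrix (Fin 2) (Fin 2) ℂ := !![0, 1; -1, 0]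

/-- For `a ∈ ℝ`, the real span `m_a` of `{T + aU, i(U + aT), H}` inside `sl₂(ℂ)` viewed as a
real Lie algebra (of traceless complex 2×2 matrices with the commutator bracket). -/
noncomputable def mSub (a : ℝ) : Submodule ℝ (Matrix (Fin 2) (Fin 2) ℂ) :=
  Submodule.span ℝ {matT + (a : ℂ) • matU, Complex.I • (matU + (a : ℂ) • matT), matH}

theorem br_formula (a x1 x2 x3 y1 y2 y3 : ℝ) :
    ⁅x1 • (matT + (a : ℂ) • matU) + x2 • (Complex.I • (matU + (a : ℂ) • matT)) + x3 • matH,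
     y1 • (matT + (a : ℂ) • matU) + y2 • (Complex.I • (matU + (a : ℂ) • matT)) + y3 • matH⁆ =
    (-2 * (1 - a ^ 2) * (x1 * y2 - x2 * y1)) • (Complex.I • matH)
      + (2 * (x3 * y1 - x1 * y3)) • (matU + (a : ℂ) • matT)
      + (2 * (x3 * y2 - x2 * y3)) • (Complex.I • (matT + (a : ℂ) • matU)) := by
  rw [Ring.lie_def]
  ext i j
  fin_cases i <;> fin_cases j <;>
    simp [matH, matT, matU, Matrix.mul_apply, Fin.sum_univ_two] <;>
    ring_nf <;> (try simp only [Complex.I_sq]) <;> (try ring_nf)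

theorem br_formula2 (a p q r z1 z2 z3 : ℝ) :
    ⁅p • (Complex.I • matH) + q • (matU + (a : ℂ) • matT)
      + r • (Complex.I • (matT + (a : ℂ) • matU)),
     z1 • (matT + (a : ℂ) • matU) + z2 • (Complex.I • (matU + (a : ℂ) • matT)) + z3 • matH⁆ =
    (-2 * p * z2 - 2 * q * z3) • (matT + (a : ℂ) • matU)
      + (2 * p * z1 - 2 * r * z3) • (Complex.I • (matU + (a : ℂ) • matT))
      + (2 * (1 - a ^ 2) * (q * z1 + r * z2)) • matH := by
  rw [Ring.lie_def]
  ext i j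
  fin_cases i <;> fin_cases j <;>
    simp [matH, matT, matU, Matrix.mul_apply, Fin.sum_univ_two] <;>
    ring_nf <;> (try simp only [Complex.I_sq]) <;> (try ring_nf)

/-- `⁅⁅m_a, m_a⁆, m_a⁆ ⊆ m_a`, and if `a² ≠ 1` then
`⁅m_a, m_a⁆ = span_ℝ {iH, U + aT, i(T + aU)}`. -/
theorem stmt_1 (a : ℝ) :
    (∀ x ∈ mSub a, ∀ y ∈ mSub a, ∀ z ∈ mSub a, ⁅⁅x, y⁆, z⁆ ∈ mSub a) ∧
    (a ^ 2 ≠ 1 →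
      Submodule.span ℝ (Set.image2 (fun x y => ⁅x, y⁆) (mSub a : Set (Matrix (Fin 2) (Fin 2) ℂ)) (mSub a : Set (Matrix (Fin 2) (Fin 2) ℂ))) =
        Submodule.span ℝ {Complex.I • matH, matU + (a : ℂ) • matT,
          Complex.I • (matT + (a : ℂ) • matU)}) := by
  constructor
  · intro x hx y hy z hz
    obtain ⟨x1, x2, x3, rfl⟩ := Submodule.mem_span_triple.1 hx
    obtain ⟨y1, y2, y3, rfl⟩ := Submodule.mem_span_triple.1 hy
    obtain ⟨z1, z2, z3, rfl⟩ := Submodule.mem_span_triple.1 hz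
    rw [br_formula, br_formula2]
    exact Submodule.mem_span_triple.2 ⟨_, _, _, rfl⟩
  · intro ha
    have ha' : 1 - a ^ 2 ≠ 0 := fun h => ha (by linarith)
    apply le_antisymm
    · rw [Submodule.span_le]
      rintro _ ⟨x, hx, y, hy, rfl⟩
      obtain ⟨x1, x2, x3, rfl⟩ := Submodule.mem_span_triple.1 hx
      obtain ⟨y1, y2, y3, rfl⟩ := Submodule.mem_span_triple.1 hy
      simp only [br_formula]
      exact Submodule.mem_span_triple.2 ⟨_, _, _, rfl⟩
    · have key : ∀ x1 x2 x3 y1 y2 y3 : ℝ, _ := fun x1 x2 x3 y1 y2 y3 =>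
        Submodule.subset_span (R := ℝ) (Set.mem_image2_of_mem (f := fun x y => ⁅x, y⁆)
          (show _ ∈ (mSub a : Set (Matrix (Fin 2) (Fin 2) ℂ)) from
            Submodule.mem_span_triple.2 ⟨x1, x2, x3, rfl⟩)
          (show _ ∈ (mSub a : Set (Matrix (Fin 2) (Fin 2) ℂ)) from
            Submodule.mem_span_triple.2 ⟨y1, y2, y3, rfl⟩))
      simp only [br_formula] at key
      rw [Submodule.span_le]
      rintro _ (rfl | rfl | rfl)
      · have h := key 1 0 0 0 (-(2 * (1 - a ^ 2))⁻¹) 0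
        have e : -2 * (1 - a ^ 2) * (1 * (-(2 * (1 - a ^ 2))⁻¹) - 0 * 0) = 1 := by
          field_simp
          ring
        rw [e] at h
        simpa using h
      · have h := key 0 0 (1 / 2) 1 0 0
        simpa using h
      · have h := key 0 0 (1 / 2) 0 1 0
        simpa using h
end

section
/- The real span h of {iH, iT, U} is a real Lie subalgebra of sl₂(ℂ) (closed under the Lie bracket), and for every a ∈ ℝ with a² ≠ 1 one has the internal direct sum decomposition of real vector spaces sl₂(ℂ) = m_a ⊕ h, i.e. m_a ∩ h = {0} and m_a + h = sl₂(ℂ). -/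
open Matrix

/-- The real span `h` of `{iH, iT, U}`. -/
noncomputable def hSub : Submodule ℝ (Matrix (Fin 2) (Fin 2) ℂ) :=
  Submodule.span ℝ {Complex.I • matH, Complex.I • matT, matU}

/-- `sl₂(ℂ)` as a real subspace of the complex 2×2 matrices: the kernel of the trace. -/
noncomputable def sl2R : Submodule ℝ (Matrix (Fin 2) (Fin 2) ℂ) :=
  LinearMap.ker ((Matrix.traceLinearMap (Fin 2) ℂ ℂ).restrictScalars ℝ)

theorem mem_hSub_iff (x : Matrix (Fin 2) (Fin 2) ℂ) : x ∈ hSub ↔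
    ∃ p q r : ℝ, x = !![(p : ℂ) * Complex.I, q * Complex.I + r;
      q * Complex.I - r, -(p * Complex.I)] := by
  unfold hSub
  rw [Submodule.mem_span_triple]
  refine exists_congr fun p => exists_congr fun q => exists_congr fun r => ?_
  rw [eq_comm]
  have : p • Complex.I • matH + q • Complex.I • matT + r • matU =
      !![(p : ℂ) * Complex.I, q * Complex.I + r; q * Complex.I - r, -(p * Complex.I)] := by
    ext i j
    fin_cases i <;> fin_cases j <;> simp [matH, matT, matU, sub_eq_add_neg]
  rw [this]

theorem mem_mSub_iff (a : ℝ) (x : Matrix (Fin 2) (Fin 2) ℂ) : x ∈ mSub a ↔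
    ∃ t s u : ℝ, x = !![(u : ℂ), t * (1 + a) + s * (1 + a) * Complex.I;
      t * (1 - a) + s * (a - 1) * Complex.I, -u] := by
  unfold mSub
  rw [Submodule.mem_span_triple]
  refine exists_congr fun t => exists_congr fun s => exists_congr fun u => ?_
  rw [eq_comm]
  have : t • (matT + (a : ℂ) • matU) + s • Complex.I • (matU + (a : ℂ) • matT) + u • matH =
      !![(u : ℂ), t * (1 + a) + s * (1 + a) * Complex.I;
      t * (1 - a) + s * (a - 1) * Complex.I, -u] := by
    ext i j
    fin_cases i <;> fin_cases j <;> simp [matH, matT, matU] <;> ring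
  rw [this]

/-- `h = span_ℝ {iH, iT, U}` is a real Lie subalgebra of `sl₂(ℂ)` (closed under
the commutator bracket), and for every `a` with `a² ≠ 1` one has the internal direct sum
decomposition `sl₂(ℂ) = m_a ⊕ h` of real vector spaces. -/
theorem stmt_2 :
    (∀ x ∈ hSub, ∀ y ∈ hSub, ⁅x, y⁆ ∈ hSub) ∧
    (∀ a : ℝ, a ^ 2 ≠ 1 → mSub a ⊓ hSub = ⊥ ∧ mSub a ⊔ hSub = sl2R) := by
  refine ⟨?_, ?_⟩
  · intro x hx y hy
    rw [mem_hSub_iff] at *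
    obtain ⟨p, q, r, rfl⟩ := hx
    obtain ⟨p', q', r', rfl⟩ := hy
    refine ⟨2 * (r * q' - r' * q), 2 * (p * r' - r * p'), 2 * (q * p' - p * q'), ?_⟩
    ext i j
    fin_cases i <;> fin_cases j <;>
      simp [Ring.lie_def, Matrix.mul_apply, Fin.sum_univ_two, Complex.ext_iff] <;>
      (constructor <;> ring)
  · intro a _
    constructor
    · rw [eq_bot_iff]
      rintro x ⟨h1, h2⟩
      obtain ⟨t, s, u, h1⟩ := (mem_mSub_iff a x).1 h1
      obtain ⟨p, q, r, h2⟩ := (mem_hSub_iff x).1 h2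
      have h := h1.symm.trans h2
      have h00 := congrFun (congrFun h 0) 0
      have h01 := congrFun (congrFun h 0) 1
      have h10 := congrFun (congrFun h 1) 0
      simp [Complex.ext_iff] at h00 h01 h10
      have ht : t = 0 := by linarith [h01.1, h10.1]
      have hs : s = 0 := by linarith [h01.2, h10.2]
      rw [Submodule.mem_bot, h1, h00.1, ht, hs]
      ext i j
      fin_cases i <;> fin_cases j <;> simp
    · apply le_antisymm
      · rw [sup_le_iff]
        constructor
        · intro x hx
          obtain ⟨t, s, u, rfl⟩ := (mem_mSub_iff a x).1 hx
          simp [sl2R, Matrix.trace_fin_two]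
        · intro x hx
          obtain ⟨t, s, u, rfl⟩ := (mem_hSub_iff x).1 hx
          simp [sl2R, Matrix.trace_fin_two]
      · intro x hx
        simp [sl2R, Matrix.trace_fin_two] at hx
        set t : ℝ := ((x 0 1).re + (x 1 0).re) / 2 with ht
        set s : ℝ := ((x 0 1).im - (x 1 0).im) / 2 with hs
        rw [Submodule.mem_sup]
        refine ⟨_, (mem_mSub_iff a _).2 ⟨t, s, (x 0 0).re, rfl⟩, _,
          (mem_hSub_iff _).2 ⟨(x 0 0).im, (x 0 1).im - s * (1 + a),
            (x 0 1).re - t * (1 + a), rfl⟩, ?_⟩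
        have h11 : x 1 1 = - x 0 0 := by linear_combination hx
        ext i j
        fin_cases i <;> fin_cases j <;> simp [Complex.ext_iff, h11, ht, hs]
        constructor <;> ring
end

section
/- For a ∈ ℝ, the restriction of the real bilinear form B(X,Y) = Re(trace(ad X ∘ ad Y)) to the real span of {iH, U + aT, i(T + aU)} in sl₂(ℂ) is negative definite if and only if −1 < a < 1. -/
open Matrix

attribute [local instance 100] LieRing.ofAssociativeRing

/-- `sl₂(ℂ)`, the Lie algebra of traceless complex 2×2 matrices. -/
abbrev sl2C : LieSubalgebra ℂ (Matrix (Fin 2) (Fin 2) ℂ) :=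
  LieAlgebra.SpecialLinear.sl (Fin 2) ℂ

/-- `H` as an element of `sl₂(ℂ)`. -/
def elH : sl2C :=
  ⟨!![1, 0; 0, -1], show (!![1, 0; 0, -1] : Matrix (Fin 2) (Fin 2) ℂ) ∈
      LinearMap.ker (Matrix.traceLinearMap (Fin 2) ℂ ℂ) from
    LinearMap.mem_ker.2 (by simp [Matrix.trace_fin_two])⟩

/-- `T` as an element of `sl₂(ℂ)`. -/
def elT : sl2C :=
  ⟨!![0, 1; 1, 0], show (!![0, 1; 1, 0] : Matrix (Fin 2) (Fin 2) ℂ) ∈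
      LinearMap.ker (Matrix.traceLinearMap (Fin 2) ℂ ℂ) from
    LinearMap.mem_ker.2 (by simp [Matrix.trace_fin_two])⟩

/-- `U` as an element of `sl₂(ℂ)`. -/
def elU : sl2C :=
  ⟨!![0, 1; -1, 0], show (!![0, 1; -1, 0] : Matrix (Fin 2) (Fin 2) ℂ) ∈
      LinearMap.ker (Matrix.traceLinearMap (Fin 2) ℂ ℂ) from
    LinearMap.mem_ker.2 (by simp [Matrix.trace_fin_two])⟩

/-- The real bilinear form `B(X,Y) = Re (trace (ad X ∘ ad Y))`, where `ad X ∘ ad Y` is viewed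
as a `ℂ`-linear endomorphism of `sl₂(ℂ)`. -/
noncomputable def B (x y : sl2C) : ℝ := (killingForm ℂ sl2C x y).re

/-- coordinates on `sl₂(ℂ)` -/
noncomputable def coordE : sl2C ≃ₗ[ℂ] (Fin 3 → ℂ) where
  toFun x := ![x.1 0 0, x.1 0 1, x.1 1 0]
  invFun v := ⟨!![v 0, v 1; v 2, -v 0], show (!![v 0, v 1; v 2, -v 0] : Matrix (Fin 2) (Fin 2) ℂ) ∈
      LinearMap.ker (Matrix.traceLinearMap (Fin 2) ℂ ℂ) from
    LinearMap.mem_ker.2 (by simp [Matrix.trace_fin_two])⟩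
  map_add' x y := by
    ext i; fin_cases i <;> simp
  map_smul' c x := by
    ext i; fin_cases i <;> simp
  left_inv x := by
    have h : x.1.trace = 0 := LinearMap.mem_ker.1 x.2
    rw [Matrix.trace_fin_two] at h
    apply Subtype.ext
    ext i j
    fin_cases i <;> fin_cases j <;> simp
    linear_combination -h
  right_inv v := by
    ext i; fin_cases i <;> simp

theorem killing_aux (x : sl2C) :
    killingForm ℂ sl2C x x = 8 * (x.1 0 0 ^ 2 + x.1 0 1 * x.1 1 0) := by
  have h : x.1.trace = 0 := LinearMap.mem_ker.1 x.2
  rw [Matrix.trace_fin_two] at h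
  have h1 : x.1 1 1 = - x.1 0 0 := by linear_combination h
  rw [killingForm_apply_apply,
    LinearMap.trace_eq_matrix_trace ℂ (Module.Basis.ofEquivFun coordE), Matrix.trace_fin_three]
  simp only [LinearMap.toMatrix_apply, Module.Basis.coe_ofEquivFun, Module.Basis.ofEquivFun_repr_apply]
  simp [coordE, Ring.lie_def, Matrix.mul_apply, Fin.sum_univ_two, h1, Matrix.vecMul, dotProduct]
  ring

theorem B_aux (a p q r : ℝ) (x : sl2C) (hx : x = p • (Complex.I • elH) + (q • (elU + (a : ℂ) • elT) +
      r • (Complex.I • (elT + (a : ℂ) • elU)))) :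
    B x x = -8 * (p ^ 2 + (1 - a ^ 2) * (q ^ 2 + r ^ 2)) := by
  have e00 : x.1 0 0 = p * Complex.I := by
    rw [hx]; simp [elH, elT, elU]
  have e01 : x.1 0 1 = q * (1 + a) + r * Complex.I * (1 + a) := by
    rw [hx]; simp [elH, elT, elU]; ring
  have e10 : x.1 1 0 = q * (-1 + a) + r * Complex.I * (1 - a) := by
    rw [hx]; simp [elH, elT, elU]; ring
  rw [B, killing_aux, e00, e01, e10]
  simp [pow_two]
  ring

/-- the restriction of `B` to the real span of `{iH, U + aT, i(T + aU)}` is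
negative definite if and only if `-1 < a < 1`. -/
theorem stmt_3 (a : ℝ) :
    (∀ x ∈ Submodule.span ℝ ({Complex.I • elH, elU + (a : ℂ) • elT,
        Complex.I • (elT + (a : ℂ) • elU)} : Set sl2C),
      x ≠ 0 → B x x < 0)
    ↔ (-1 < a ∧ a < 1) := by
  constructor
  · intro h
    have hB := B_aux a 0 1 0 (elU + (a : ℂ) • elT) (by simp)
    have h2 := h (elU + (a : ℂ) • elT) (Submodule.subset_span (by simp)) (by
      intro h0
      have e01 : (elU + (a : ℂ) • elT).1 0 1 = 0 := by rw [h0]; simp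
      have e10 : (elU + (a : ℂ) • elT).1 1 0 = 0 := by rw [h0]; simp
      simp [elU, elT] at e01 e10
      have h2 : (2 : ℂ) = 0 := by linear_combination e01 - e10
      norm_num at h2)
    constructor <;> nlinarith
  · rintro ⟨h1, h2⟩ x hx hx0
    rw [Submodule.mem_span_insert] at hx
    obtain ⟨p, z, hz, rfl⟩ := hx
    rw [Submodule.mem_span_pair] at hz
    obtain ⟨q, r, rfl⟩ := hz
    rw [B_aux a p q r _ rfl]
    have ha : 0 < 1 - a ^ 2 := by nlinarith
    by_contra hc
    have hqr : 0 ≤ (1 - a ^ 2) * (q ^ 2 + r ^ 2) := by positivity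
    have hp : p = 0 := by nlinarith [sq_nonneg p]
    have h0 : (1 - a ^ 2) * (q ^ 2 + r ^ 2) = 0 := by nlinarith [sq_nonneg p]
    have h3 : q ^ 2 + r ^ 2 = 0 := (mul_eq_zero.1 h0).resolve_left ha.ne'
    have hq : q = 0 := by nlinarith [sq_nonneg q, sq_nonneg r]
    have hr : r = 0 := by nlinarith [sq_nonneg q, sq_nonneg r]
    apply hx0
    simp [hp, hq, hr]
end

section
/- For a ∈ ℝ with a² ≠ 1, one has ⁅h, m_a⁆ ⊆ m_a if and only if a = 0. -/
open Matrix

/-- for `a ∈ ℝ` with `a² ≠ 1`, one has `⁅h, m_a⁆ ⊆ m_a` if and only if `a = 0`. -/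
theorem stmt_5 (a : ℝ) (ha : a ^ 2 ≠ 1) :
    (∀ x ∈ hSub, ∀ y ∈ mSub a, ⁅x, y⁆ ∈ mSub a) ↔ a = 0 := by
  constructor
  · intro h
    have hU : matU ∈ hSub := Submodule.subset_span (by simp)
    have hH : matH ∈ mSub a := Submodule.subset_span (by simp)
    have h1 := h _ hU _ hH
    rw [mSub, Submodule.mem_span_triple] at h1
    obtain ⟨p, q, r, e⟩ := h1
    have e01 := congrArg Complex.re (congrFun (congrFun e 0) 1)
    have e10 := congrArg Complex.re (congrFun (congrFun e 1) 0)
    simp [matH, matT, matU, Ring.lie_def, Matrix.mul_apply, Fin.sum_univ_two] at e01 e10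
    have hp : p * a = 0 := by linarith
    rcases mul_eq_zero.mp hp with h0 | h0
    · subst h0
      norm_num at e01
    · exact h0
  · rintro rfl x hx y hy
    rw [hSub, Submodule.mem_span_triple] at hx
    rw [mSub, Submodule.mem_span_triple] at hy
    obtain ⟨p, q, r, rfl⟩ := hx
    obtain ⟨u, v, w, rfl⟩ := hy
    rw [mSub, Submodule.mem_span_triple]
    refine ⟨2 * (r * (-w)) - 2 * p * v, 2 * p * u - 2 * q * w, 2 * q * v + 2 * r * u, ?_⟩
    ext i j
    fin_cases i <;> fin_cases j <;> apply Complex.ext <;>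
      simp [matH, matT, matU, Ring.lie_def, Matrix.mul_apply, Fin.sum_univ_two] <;> ring
end

section
/- Let a, b ∈ ℝ with −1 < a < 1 and −1 < b < 1. There exist c₁, c₂, d₁, d₂ ∈ ℝ satisfying the system: c₁²+c₂²+d₁²+d₂² = 1; d₁c₂ − c₁d₂ = 0; d₁c₁ + c₂d₂ = 0; c₁d₂ + c₂d₁ = 0; c₂d₂ − c₁d₁ = 0; (d₂²−d₁² − a(c₂²−c₁²))·b = c₁²−c₂² − a(d₂²−d₁²); (d₁d₂ + c₁c₂a)·b = c₁c₂ − a·d₁d₂; b·(−a(c₁²−c₂²) + (d₂²−d₁²)) = −a(d₂²−d₁²) − (c₁²−c₂²); b·(c₁c₂a − d₁d₂) = d₁d₂·a + c₁c₂, if and only if b = −a. -/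
/-- For `a, b ∈ (-1,1)`, the system of nine polynomial equations in
`c₁, c₂, d₁, d₂` has a solution if and only if `b = -a`. -/
theorem stmt_6 (a b : ℝ) (ha : -1 < a ∧ a < 1) (hb : -1 < b ∧ b < 1) :
    (∃ c₁ c₂ d₁ d₂ : ℝ,
      c₁^2 + c₂^2 + d₁^2 + d₂^2 = 1 ∧
      d₁*c₂ - c₁*d₂ = 0 ∧
      d₁*c₁ + c₂*d₂ = 0 ∧
      c₁*d₂ + c₂*d₁ = 0 ∧
      c₂*d₂ - c₁*d₁ = 0 ∧
      (d₂^2 - d₁^2 - a*(c₂^2 - c₁^2)) * b = c₁^2 - c₂^2 - a*(d₂^2 - d₁^2) ∧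
      (d₁*d₂ + c₁*c₂*a) * b = c₁*c₂ - a*d₁*d₂ ∧
      b * (-(a*(c₁^2 - c₂^2)) + (d₂^2 - d₁^2)) = -(a*(d₂^2 - d₁^2)) - (c₁^2 - c₂^2) ∧
      b * (c₁*c₂*a - d₁*d₂) = d₁*d₂*a + c₁*c₂)
    ↔ b = -a := by
  constructor
  · rintro ⟨c₁, c₂, d₁, d₂, h1, -, -, -, -, h6, h7, h8, h9⟩
    by_contra hne
    have hs : a + b ≠ 0 := fun h => hne (by linarith)
    have hab : 1 - a * b ≠ 0 := by
      have : 0 < 1 - a * b := by nlinarith [ha.1, ha.2, hb.1, hb.2]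
      exact this.ne'
    have hC : c₁^2 - c₂^2 = 0 :=
      (mul_eq_zero.mp (show (1 - a * b) * (c₁^2 - c₂^2) = 0 by linarith)).resolve_left hab
    have hQ : c₁ * c₂ = 0 :=
      (mul_eq_zero.mp (show (1 - a * b) * (c₁ * c₂) = 0 by linarith)).resolve_left hab
    have hD : d₂^2 - d₁^2 = 0 :=
      (mul_eq_zero.mp (show (a + b) * (d₂^2 - d₁^2) = 0 by linarith)).resolve_left hs
    have hP : d₁ * d₂ = 0 :=
      (mul_eq_zero.mp (show (a + b) * (d₁ * d₂) = 0 by linarith)).resolve_left hs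
    have hc : c₁^2 + c₂^2 = 0 := by
      have : (c₁^2 + c₂^2)^2 = 0 := by
        linear_combination (c₁^2 - c₂^2) * hC + 4 * (c₁ * c₂) * hQ
      exact pow_eq_zero_iff (two_ne_zero) |>.mp this
    have hd : d₁^2 + d₂^2 = 0 := by
      have : (d₁^2 + d₂^2)^2 = 0 := by
        linear_combination (d₂^2 - d₁^2) * hD + 4 * (d₁ * d₂) * hP
      exact pow_eq_zero_iff (two_ne_zero) |>.mp this
    linarith
  · rintro rfl
    exact ⟨0, 0, 1, 0, by norm_num⟩
end

section
/- Let S be the group whose underlying set is SL₂(ℝ) × {traceless real 2×2 matrices} with multiplication (A₁,X₁)∘(A₂,X₂) = (A₁A₂, A₂⁻¹X₁A₂ + X₂). Then for every (A,X) ∈ S there exist unique a > 0, b, u, k, l ∈ ℝ and t ∈ [0, 2π) such that (A,X) = (!![a, 0; b, a⁻¹], !![0, u; −u, 0]) ∘ (!![cos t, sin t; −sin t, cos t], !![k, l; l, −k]). -/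
open Matrix Real

/-- The rotation matrix `!![cos t, sin t; −sin t, cos t]`. -/
noncomputable def rot (t : ℝ) : Matrix (Fin 2) (Fin 2) ℝ :=
  !![Real.cos t, Real.sin t; -Real.sin t, Real.cos t]

theorem exists_angle (x y : ℝ) (h : x ^ 2 + y ^ 2 = 1) :
    ∃ t ∈ Set.Ico (0 : ℝ) (2 * Real.pi), Real.cos t = x ∧ Real.sin t = y := by
  have hx1 : -1 ≤ x := by nlinarith [sq_nonneg y]
  have hx2 : x ≤ 1 := by nlinarith [sq_nonneg y]
  have hpi := Real.pi_pos
  have hs : Real.sin (Real.arccos x) = |y| := by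
    rw [Real.sin_arccos, ← Real.sqrt_sq_eq_abs]
    congr 1
    linarith
  rcases le_or_gt 0 y with hy | hy
  · refine ⟨Real.arccos x, ⟨Real.arccos_nonneg x, ?_⟩, Real.cos_arccos hx1 hx2, ?_⟩
    · linarith [Real.arccos_le_pi x]
    · rw [hs, abs_of_nonneg hy]
  · have h0 : 0 < Real.arccos x := by
      rw [Real.arccos_pos]
      nlinarith [mul_pos_of_neg_of_neg hy hy]
    refine ⟨2 * Real.pi - Real.arccos x, ⟨?_, ?_⟩, ?_, ?_⟩
    · linarith [Real.arccos_le_pi x]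
    · linarith
    · rw [Real.cos_two_pi_sub, Real.cos_arccos hx1 hx2]
    · rw [Real.sin_two_pi_sub, hs, abs_of_neg hy, neg_neg]

theorem angle_unique (s t : ℝ) (hs : s ∈ Set.Ico (0 : ℝ) (2 * Real.pi))
    (ht : t ∈ Set.Ico (0 : ℝ) (2 * Real.pi)) (hc : Real.cos s = Real.cos t)
    (hn : Real.sin s = Real.sin t) : s = t := by
  have h : Real.cos (s - t) = 1 := by
    rw [Real.cos_sub, hc, hn]
    nlinarith [Real.sin_sq_add_cos_sq t]
  rw [Real.cos_eq_one_iff_of_lt_of_lt (by linarith [hs.1, ht.2]) (by linarith [hs.2, ht.1])] at h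
  linarith

theorem rot_conj (t u : ℝ) : (rot t)⁻¹ * !![0, u; -u, 0] * rot t = !![0, u; -u, 0] := by
  have hd : (rot t).det = 1 := by
    rw [rot, Matrix.det_fin_two_of]
    nlinarith [Real.sin_sq_add_cos_sq t]
  have hc : !![0, u; -u, 0] * rot t = rot t * !![0, u; -u, 0] := by
    ext i j
    fin_cases i <;> fin_cases j <;> simp [rot, Matrix.mul_apply, Fin.sum_univ_two] <;> ring
  rw [Matrix.mul_assoc, hc, ← Matrix.mul_assoc, Matrix.nonsing_inv_mul _ (by simp [hd]),
    Matrix.one_mul]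

theorem mat_eq_iff (M : Matrix (Fin 2) (Fin 2) ℝ) (a b c d : ℝ) :
    M = !![a, b; c, d] ↔ M 0 0 = a ∧ M 0 1 = b ∧ M 1 0 = c ∧ M 1 1 = d := by
  constructor
  · rintro rfl
    simp
  · rintro ⟨rfl, rfl, rfl, rfl⟩
    exact Matrix.eta_fin_two M

theorem A_eq_iff (M : Matrix (Fin 2) (Fin 2) ℝ) (a b t : ℝ) :
    M = !![a, 0; b, a⁻¹] * rot t ↔ M 0 0 = a * Real.cos t ∧ M 0 1 = a * Real.sin t ∧
      M 1 0 = b * Real.cos t - a⁻¹ * Real.sin t ∧ M 1 1 = b * Real.sin t + a⁻¹ * Real.cos t := by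
  rw [← mat_eq_iff]
  simp [rot, sub_eq_add_neg]

theorem X_eq_iff (X : Matrix (Fin 2) (Fin 2) ℝ) (u k l t : ℝ) :
    X = (rot t)⁻¹ * !![0, u; -u, 0] * rot t + !![k, l; l, -k] ↔
      X 0 0 = k ∧ X 0 1 = u + l ∧ X 1 0 = -u + l ∧ X 1 1 = -k := by
  rw [← mat_eq_iff, rot_conj]
  simp

/-- in the group with underlying set `SL₂(ℝ) × {traceless real 2×2 matrices}` and
multiplication `(A₁,X₁)∘(A₂,X₂) = (A₁A₂, A₂⁻¹X₁A₂ + X₂)`, every element `(A,X)` is uniquely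
`(!![a,0;b,a⁻¹], !![0,u;−u,0]) ∘ (!![cos t, sin t; −sin t, cos t], !![k,l;l,−k])` with
`a > 0`, `b, u, k, l ∈ ℝ` and `t ∈ [0, 2π)`. -/
theorem stmt_9 (A : Matrix.SpecialLinearGroup (Fin 2) ℝ)
    (X : Matrix (Fin 2) (Fin 2) ℝ) (hX : X.trace = 0) :
    ∃! p : ℝ × ℝ × ℝ × ℝ × ℝ × ℝ,
      0 < p.1 ∧ p.2.2.2.2.2 ∈ Set.Ico (0 : ℝ) (2 * Real.pi) ∧
      (A : Matrix (Fin 2) (Fin 2) ℝ) = !![p.1, 0; p.2.1, p.1⁻¹] * rot p.2.2.2.2.2 ∧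
      X = (rot p.2.2.2.2.2)⁻¹ * !![0, p.2.2.1; -p.2.2.1, 0] * rot p.2.2.2.2.2 +
        !![p.2.2.2.1, p.2.2.2.2.1; p.2.2.2.2.1, -p.2.2.2.1] := by
  have hdet : A.1 0 0 * A.1 1 1 - A.1 0 1 * A.1 1 0 = 1 := by
    rw [← Matrix.det_fin_two]
    exact A.2
  have htr : X 0 0 + X 1 1 = 0 := by
    rw [← Matrix.trace_fin_two]
    exact hX
  simp only [A_eq_iff, X_eq_iff]
  generalize A.1 0 0 = α at *
  generalize A.1 0 1 = β at *
  generalize A.1 1 0 = γ at *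
  generalize A.1 1 1 = δ at *
  have hpos : 0 < α ^ 2 + β ^ 2 := by
    rcases eq_or_ne α 0 with h | h
    · have : β ≠ 0 := by
        rintro rfl
        simp [h] at hdet
      positivity
    · positivity
  obtain ⟨a, ha, ha2⟩ : ∃ a : ℝ, 0 < a ∧ a ^ 2 = α ^ 2 + β ^ 2 :=
    ⟨√(α ^ 2 + β ^ 2), Real.sqrt_pos.2 hpos, Real.sq_sqrt hpos.le⟩
  obtain ⟨t, ht, hc, hs⟩ := exists_angle (α / a) (β / a) (by
    rw [div_pow, div_pow, ← add_div, ← ha2]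
    exact div_self (by positivity))
  have hα : α = a * Real.cos t := by rw [hc]; field_simp
  have hβ : β = a * Real.sin t := by rw [hs]; field_simp
  have hcs := Real.sin_sq_add_cos_sq t
  clear hc hs
  have hdet' : δ * Real.cos t - γ * Real.sin t = a⁻¹ := by
    apply eq_inv_of_mul_eq_one_left
    rw [hα, hβ] at hdet
    linarith
  refine ⟨(a, γ * Real.cos t + δ * Real.sin t, (X 0 1 - X 1 0) / 2, X 0 0,
    (X 0 1 + X 1 0) / 2, t), ⟨ha, ht, ⟨hα, hβ, ?_, ?_⟩, rfl, ?_, ?_, ?_⟩, ?_⟩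
  · dsimp only
    rw [← hdet']
    linear_combination (-γ) * hcs
  · dsimp only
    rw [← hdet']
    linear_combination (-δ) * hcs
  · dsimp only
    ring
  · dsimp only
    ring
  · dsimp only
    linarith
  · rintro ⟨a', b', u', k', l', t'⟩ ⟨ha', ht', ⟨h1, h2, h3, h4⟩, h5, h6, h7, h8⟩
    dsimp only at *
    have hcs' := Real.sin_sq_add_cos_sq t'
    have haa : a' = a := by
      have : a' ^ 2 = a ^ 2 := by
        rw [ha2, h1, h2]
        linear_combination (-a' ^ 2) * hcs'
      exact (pow_left_inj₀ ha'.le ha.le two_ne_zero).1 this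
    subst haa
    have htt : t' = t := by
      apply angle_unique _ _ ht' ht
      · exact mul_left_cancel₀ ha.ne' (h1.symm.trans hα)
      · exact mul_left_cancel₀ ha.ne' (h2.symm.trans hβ)
    subst htt
    have hb : b' = γ * Real.cos t' + δ * Real.sin t' := by
      rw [h3, h4]
      linear_combination (-b') * hcs
    simp only [Prod.mk.injEq, true_and, and_true]
    refine ⟨hb, ?_, h5.symm, ?_⟩ <;> linarith
end

section
/- Every 3-dimensional Lie subalgebra of so₃(ℝ) × so₃(ℝ) that contains no nonzero Lie ideal of so₃(ℝ) × so₃(ℝ) is mapped by some Lie algebra automorphism of so₃(ℝ) × so₃(ℝ) onto the diagonal {(X, X) : X ∈ so₃(ℝ)}. -/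
open Matrix

attribute [local instance 100] LieRing.ofAssociativeRing

/-- The componentwise Lie bracket on a product of Lie rings. -/
instance prodLieRing (L M : Type*) [LieRing L] [LieRing M] : LieRing (L × M) where
  bracket p q := (⁅p.1, q.1⁆, ⁅p.2, q.2⁆)
  add_lie x y z := by
    show (⁅x.1 + y.1, z.1⁆, ⁅x.2 + y.2, z.2⁆)
      = (⁅x.1, z.1⁆, ⁅x.2, z.2⁆) + (⁅y.1, z.1⁆, ⁅y.2, z.2⁆)
    simp [add_lie, Prod.ext_iff]
  lie_add x y z := by
    show (⁅x.1, y.1 + z.1⁆, ⁅x.2, y.2 + z.2⁆)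
      = (⁅x.1, y.1⁆, ⁅x.2, y.2⁆) + (⁅x.1, z.1⁆, ⁅x.2, z.2⁆)
    simp [lie_add, Prod.ext_iff]
  lie_self x := by
    show (⁅x.1, x.1⁆, ⁅x.2, x.2⁆) = (0 : L × M)
    simp [Prod.ext_iff]
  leibniz_lie x y z := by
    show (⁅x.1, ⁅y.1, z.1⁆⁆, ⁅x.2, ⁅y.2, z.2⁆⁆)
      = (⁅⁅x.1, y.1⁆, z.1⁆, ⁅⁅x.2, y.2⁆, z.2⁆) + (⁅y.1, ⁅x.1, z.1⁆⁆, ⁅y.2, ⁅x.2, z.2⁆⁆)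
    simp [Prod.ext_iff]

/-- The product of two Lie algebras, with the componentwise bracket. -/
instance prodLieAlgebra (R L M : Type*) [CommRing R] [LieRing L] [LieRing M]
    [LieAlgebra R L] [LieAlgebra R M] : LieAlgebra R (L × M) where
  lie_smul t x y := by
    show (⁅x.1, t • y.1⁆, ⁅x.2, t • y.2⁆) = t • (⁅x.1, y.1⁆, ⁅x.2, y.2⁆)
    simp [Prod.ext_iff]

/-- `so₃(ℝ)`, the Lie algebra of skew-symmetric real 3×3 matrices. -/
abbrev so3R : LieSubalgebra ℝ (Matrix (Fin 3) (Fin 3) ℝ) :=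
  LieAlgebra.Orthogonal.so (Fin 3) ℝ

/-- The diagonal `{(X, X)}` of `so₃(ℝ) × so₃(ℝ)`, as a real subspace. -/
def hDiag : Submodule ℝ (so3R × so3R) :=
  LinearMap.range (LinearMap.prod LinearMap.id LinearMap.id)

/-- The standard linear identification of so3 with `ℝ³`. -/
noncomputable def soEquiv : so3R ≃ₗ[ℝ] (Fin 3 → ℝ) where
  toFun X := ![X.1 2 1, X.1 0 2, X.1 1 0]
  map_add' X Y := by ext i; fin_cases i <;> simp
  map_smul' c X := by ext i; fin_cases i <;> simp
  invFun v := ⟨!![0, -v 2, v 1; v 2, 0, -v 0; -v 1, v 0, 0], by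
    rw [LieAlgebra.Orthogonal.mem_so]
    ext i j; fin_cases i <;> fin_cases j <;> simp⟩
  left_inv X := by
    have hX := (LieAlgebra.Orthogonal.mem_so _ _ X.1).1 X.2
    have h (i j) : X.1 j i = - X.1 i j := by
      have := congrFun (congrFun hX i) j
      simpa using this
    apply Subtype.ext
    ext i j
    have h00 := h 0 0
    have h11 := h 1 1
    have h22 := h 2 2
    have h01 := h 0 1
    have h02 := h 0 2
    have h12 := h 1 2
    fin_cases i <;> fin_cases j <;> simp <;> linarith
  right_inv v := by ext i; fin_cases i <;> simp

theorem soEquiv_lie (X Y : so3R) : soEquiv ⁅X, Y⁆ = crossProduct (soEquiv X) (soEquiv Y) := by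
  have hs (X : so3R) (i j) : X.1 j i = - X.1 i j := by
    have hX := (LieAlgebra.Orthogonal.mem_so _ _ X.1).1 X.2
    have := congrFun (congrFun hX i) j
    simpa using this
  have d (X : so3R) (i) : X.1 i i = 0 := by linarith [hs X i i]
  rw [cross_apply]
  have hb : (⁅X, Y⁆ : so3R).1 = X.1 * Y.1 - Y.1 * X.1 := rfl
  ext i
  fin_cases i <;>
    simp [soEquiv, hb, Matrix.mul_apply, Fin.sum_univ_three, d, hs _ 0 1, hs _ 0 2, hs _ 1 2] <;>
    ring

theorem finrank_so3 : Module.finrank ℝ so3R = 3 := by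
  rw [soEquiv.finrank_eq]; simp

instance : FiniteDimensional ℝ so3R := soEquiv.symm.finiteDimensional

theorem indep_of_cross {u v : Fin 3 → ℝ} (h : crossProduct u v ≠ 0) :
    LinearIndependent ℝ ![u, v, crossProduct u v] := by
  have : (Matrix.of ![u, v, crossProduct u v]).det ≠ 0 := by
    intro hd
    apply h
    rw [Matrix.det_fin_three] at hd
    simp [cross_apply] at hd
    have a : (u 1 * v 2 - u 2 * v 1) ^ 2 + (u 2 * v 0 - u 0 * v 2) ^ 2
      + (u 0 * v 1 - u 1 * v 0) ^ 2 = 0 := by linarith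
    have h0 : u 1 * v 2 - u 2 * v 1 = 0 := by nlinarith
    have h1 : u 2 * v 0 - u 0 * v 2 = 0 := by nlinarith
    have h2 : u 0 * v 1 - u 1 * v 0 = 0 := by nlinarith
    rw [cross_apply, h0, h1, h2]
    ext i; fin_cases i <;> simp
  exact Matrix.linearIndependent_rows_of_det_ne_zero this

theorem sub_top_or_le_one (S : Submodule ℝ so3R) (hS : ∀ x ∈ S, ∀ y ∈ S, ⁅x, y⁆ ∈ S) :
    S = ⊤ ∨ Module.finrank ℝ S ≤ 1 := by
  by_cases hc : ∃ x ∈ S, ∃ y ∈ S, crossProduct (soEquiv x) (soEquiv y) ≠ 0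
  · left
    obtain ⟨x, hx, y, hy, hxy⟩ := hc
    have li := indep_of_cross hxy
    have hli : LinearIndependent ℝ (![⟨x, hx⟩, ⟨y, hy⟩, ⟨⁅x, y⁆, hS x hx y hy⟩] : Fin 3 → S) := by
      apply LinearIndependent.of_comp (soEquiv.toLinearMap ∘ₗ S.subtype)
      convert li using 1
      ext i j
      fin_cases i <;> simp [soEquiv_lie]
    have := hli.fintype_card_le_finrank
    apply Submodule.eq_top_of_finrank_eq
    have h2 := Submodule.finrank_le S
    rw [finrank_so3] at *
    simp at this
    omega
  · right
    push Not at hc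
    by_cases h0 : ∃ x ∈ S, x ≠ 0
    · obtain ⟨x, hx, hx0⟩ := h0
      apply finrank_le_one (⟨x, hx⟩ : S)
      rintro ⟨y, hy⟩
      have h1 := hc x hx y hy
      have h2 : ¬ LinearIndependent ℝ ![soEquiv x, soEquiv y] := fun hl =>
        (crossProduct_ne_zero_iff_linearIndependent.2 hl) h1
      rw [LinearIndependent.pair_iff' (by simpa using hx0)] at h2
      push Not at h2
      obtain ⟨a, ha⟩ := h2
      refine ⟨a, Subtype.ext ?_⟩
      apply soEquiv.injective
      simpa using ha
    · push Not at h0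
      have : S = ⊥ := (Submodule.eq_bot_iff _).2 h0
      subst this
      simp

/-- every 3-dimensional Lie subalgebra of `so₃(ℝ) × so₃(ℝ)` containing no
nonzero Lie ideal of `so₃(ℝ) × so₃(ℝ)` is carried by some Lie algebra automorphism onto the
diagonal `{(X, X) : X ∈ so₃(ℝ)}`. -/
theorem stmt_13 (h : LieSubalgebra ℝ (so3R × so3R))
    (hdim : Module.finrank ℝ h = 3)
    (hnoideal : ∀ I : LieIdeal ℝ (so3R × so3R),
      I.toSubmodule ≤ h.toSubmodule → I = ⊥) :
    ∃ φ : (so3R × so3R) ≃ₗ⁅ℝ⁆ (so3R × so3R),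
      Submodule.map φ.toLieHom.toLinearMap h.toSubmodule = hDiag := by
  have hdim' : Module.finrank ℝ h.toSubmodule = 3 := hdim
  let p1 : h.toSubmodule →ₗ[ℝ] so3R := LinearMap.fst ℝ so3R so3R ∘ₗ h.toSubmodule.subtype
  let p2 : h.toSubmodule →ₗ[ℝ] so3R := LinearMap.snd ℝ so3R so3R ∘ₗ h.toSubmodule.subtype
  have e3 : Module.finrank ℝ h.toSubmodule = Module.finrank ℝ so3R := by
    rw [hdim', finrank_so3]
  have i1 : Function.Injective p1 ↔ Function.Surjective p1 :=
    LinearMap.injective_iff_surjective_of_finrank_eq_finrank e3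
  have i2 : Function.Injective p2 ↔ Function.Surjective p2 :=
    LinearMap.injective_iff_surjective_of_finrank_eq_finrank e3
  have s12 : Function.Surjective p1 → Function.Injective p2 := by
    intro hs
    let I : LieIdeal ℝ (so3R × so3R) :=
      { h.toSubmodule ⊓ LinearMap.ker (LinearMap.snd ℝ so3R so3R) with
        lie_mem := by
          rintro ⟨a, c⟩ ⟨x, y⟩ ⟨hx, hy⟩
          obtain rfl : y = 0 := hy
          obtain ⟨⟨⟨a', b⟩, hab⟩, rfl⟩ := hs a
          have := h.lie_mem hab hx
          have e : ⁅((a', b) : so3R × so3R), ((x, 0) : so3R × so3R)⁆ = (⁅a', x⁆, ⁅b, 0⁆) := rfl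
          rw [e, lie_zero] at this
          have e' : ⁅((a', c) : so3R × so3R), ((x, 0) : so3R × so3R)⁆ = (⁅a', x⁆, ⁅c, 0⁆) := rfl
          rw [lie_zero] at e'
          change ⁅((a', c) : so3R × so3R), ((x, 0) : so3R × so3R)⁆ ∈
            h.toSubmodule ⊓ LinearMap.ker (LinearMap.snd ℝ so3R so3R)
          rw [e']
          exact ⟨this, rfl⟩ }
    have hI : I = ⊥ := hnoideal I (fun x hx => hx.1)
    rw [injective_iff_map_eq_zero]
    rintro ⟨z, hz⟩ h0
    have : z ∈ I := ⟨hz, h0⟩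
    rw [hI, LieSubmodule.mem_bot] at this
    exact Subtype.ext this
  have s21 : Function.Surjective p2 → Function.Injective p1 := by
    intro hs
    let I : LieIdeal ℝ (so3R × so3R) :=
      { h.toSubmodule ⊓ LinearMap.ker (LinearMap.fst ℝ so3R so3R) with
        lie_mem := by
          rintro ⟨c, a⟩ ⟨y, x⟩ ⟨hx, hy⟩
          obtain rfl : y = 0 := hy
          obtain ⟨⟨⟨b, a'⟩, hab⟩, rfl⟩ := hs a
          have := h.lie_mem hab hx
          have e : ⁅((b, a') : so3R × so3R), ((0, x) : so3R × so3R)⁆ = (⁅b, 0⁆, ⁅a', x⁆) := rfl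
          rw [e, lie_zero] at this
          have e' : ⁅((c, a') : so3R × so3R), ((0, x) : so3R × so3R)⁆ = (⁅c, 0⁆, ⁅a', x⁆) := rfl
          rw [lie_zero] at e'
          change ⁅((c, a') : so3R × so3R), ((0, x) : so3R × so3R)⁆ ∈
            h.toSubmodule ⊓ LinearMap.ker (LinearMap.fst ℝ so3R so3R)
          rw [e']
          exact ⟨this, rfl⟩ }
    have hI : I = ⊥ := hnoideal I (fun x hx => hx.1)
    rw [injective_iff_map_eq_zero]
    rintro ⟨z, hz⟩ h0
    have : z ∈ I := ⟨hz, h0⟩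
    rw [hI, LieSubmodule.mem_bot] at this
    exact Subtype.ext this
  have key : Function.Surjective p1 ∨ Function.Surjective p2 := by
    have r1 := sub_top_or_le_one (LinearMap.range p1) (by
      rintro _ ⟨x, rfl⟩ _ ⟨y, rfl⟩
      exact ⟨⟨⁅x.1, y.1⁆, h.lie_mem x.2 y.2⟩, rfl⟩)
    have r2 := sub_top_or_le_one (LinearMap.range p2) (by
      rintro _ ⟨x, rfl⟩ _ ⟨y, rfl⟩
      exact ⟨⟨⁅x.1, y.1⁆, h.lie_mem x.2 y.2⟩, rfl⟩)
    rcases r1 with r1 | r1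
    · exact Or.inl (LinearMap.range_eq_top.1 r1)
    rcases r2 with r2 | r2
    · exact Or.inr (LinearMap.range_eq_top.1 r2)
    exfalso
    have h1 := LinearMap.finrank_le_finrank_of_injective
      (f := p1.rangeRestrict.prod p2.rangeRestrict) (by
        intro x y hxy
        have ha := congrArg (fun t => (t.1 : so3R)) hxy
        have hb := congrArg (fun t => (t.2 : so3R)) hxy
        exact Subtype.ext (Prod.ext ha hb))
    rw [Module.finrank_prod] at h1
    omega
  have hb : Function.Bijective p1 ∧ Function.Bijective p2 := by
    unfold Function.Bijective
    tauto
  let e1 := LinearEquiv.ofBijective p1 hb.1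
  let e2 := LinearEquiv.ofBijective p2 hb.2
  let f : so3R ≃ₗ[ℝ] so3R := e1.symm.trans e2
  have hf (x : h.toSubmodule) : f (p1 x) = p2 x := by
    change e2 (e1.symm (e1 x)) = e2 x
    rw [e1.symm_apply_apply]
  have hfl (a b : so3R) : f ⁅a, b⁆ = ⁅f a, f b⁆ := by
    obtain ⟨x, rfl⟩ := hb.1.2 a
    obtain ⟨y, rfl⟩ := hb.1.2 b
    rw [hf, hf]
    exact hf ⟨⁅x.1, y.1⁆, h.lie_mem x.2 y.2⟩
  let φ : (so3R × so3R) ≃ₗ⁅ℝ⁆ (so3R × so3R) :=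
    { f.prodCongr (LinearEquiv.refl ℝ so3R) with
      map_lie' := by
        rintro ⟨a, b⟩ ⟨c, d⟩
        exact Prod.ext (hfl a c) rfl }
  have hφ (z) : φ z = (f z.1, z.2) := rfl
  refine ⟨φ, ?_⟩
  ext z
  constructor
  · rintro ⟨w, hw, rfl⟩
    refine ⟨w.2, ?_⟩
    exact Prod.ext (hf ⟨w, hw⟩).symm rfl
  · rintro ⟨x, rfl⟩
    obtain ⟨w, rfl⟩ := hb.2.2 x
    exact ⟨w.1, w.2, Prod.ext (hf w) rfl⟩
end
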